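/- Let R be an F-finite Noetherian local ring of prime characteristic p and E the injective hull of the residue field of R. Then Hom_R(R^f, R) ≅ R (as left R-modules, where Hom_R(R^f, R) denotes right R-module homomorphisms) if and only if F_R(E) ≅ E. -/

import Mathlib

/-!
Write `S` for `R` viewed as an `R`-algebra by Frobenius; `R → S` is a finite local homomorphism and
`𝔪 S` is primary to the maximal ideal of `S`.  The theorem is the instance for `R → S` of
`nonempty_coind_equiv_iff`: `Hom_R(S, R) ≅ S` if and only if `S ⊗_R E_R ≅ E_S`, where `E_R`, `E_S`
are the injective hulls of the residue fields.  Put `H = Hom_R(S, R)`.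

* `tensorEval_bijective`: since `S` is finitely presented and `E_R` is injective, the evaluation map
  `S ⊗_R E_R → Hom_R(H, E_R)` is bijective.
* `nonempty_baseChange_equiv`: by adjunction this gives
  `S ⊗_R E_R ≅ Hom_S(H, Hom_R(S, E_R))` as `S`-modules.
* `Coind.isInjectiveHull` and uniqueness of injective hulls: `Hom_R(S, E_R) ≅ E_S`.

Hence `S ⊗_R E_R` is the Matlis dual `Hom_S(H, E_S)`.  If `H ≅ S`, this dual is `E_S`.  Conversely,
if the dual is `E_S`, its socle is one-dimensional, so `H` is cyclic by Nakayama's lemma, and the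
annihilator of `H` kills the faithful module `E_S`, so it is zero and `H ≅ S`
(`IsInjectiveHullOfResidueField.nonempty_equiv_of_hom_equiv`).  This last argument needs no
completeness of `S`.
-/

open TensorProduct IsLocalRing

universe u v

/-- `R` viewed as an `R`-algebra via the Frobenius `r ↦ r ^ p`.  As an `R`-module this is
the right-module structure of the bimodule `R^f`, i.e. `s · r = s * r ^ p`. -/
def FrobTwist (R : Type u) [CommRing R] (p : ℕ) [Fact p.Prime] [CharP R p] : Type u := R

noncomputable instance (R : Type u) [CommRing R] (p : ℕ) [Fact p.Prime] [CharP R p] :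
    CommRing (FrobTwist R p) := inferInstanceAs (CommRing R)

noncomputable instance (R : Type u) [CommRing R] (p : ℕ) [Fact p.Prime] [CharP R p] :
    Algebra R (FrobTwist R p) := (frobenius R p).toAlgebra

/-- The element of `FrobTwist R p` corresponding to `r : R`. -/
def FrobTwist.of (R : Type u) [CommRing R] (p : ℕ) [Fact p.Prime] [CharP R p] (r : R) :
    FrobTwist R p := r

/-- The Frobenius functor `F_R(M) = R^f ⊗_R M`, with its left `R`-module structure
coming from multiplication on the left tensor factor. -/
def FrobModule (R : Type u) [CommRing R] (p : ℕ) [Fact p.Prime] [CharP R p]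
    (M : Type v) [AddCommGroup M] [Module R M] : Type (max u v) :=
  FrobTwist R p ⊗[R] M

noncomputable instance (R : Type u) [CommRing R] (p : ℕ) [Fact p.Prime] [CharP R p]
    (M : Type v) [AddCommGroup M] [Module R M] : AddCommGroup (FrobModule R p M) :=
  inferInstanceAs (AddCommGroup (FrobTwist R p ⊗[R] M))

noncomputable instance (R : Type u) [CommRing R] (p : ℕ) [Fact p.Prime] [CharP R p]
    (M : Type v) [AddCommGroup M] [Module R M] : Module R (FrobModule R p M) :=
  inferInstanceAs (Module (FrobTwist R p) (FrobTwist R p ⊗[R] M))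

/-- `E` is an injective hull of the residue field of the local ring `A`:  it is an injective
module containing a copy of the residue field as an essential submodule
(every nonzero submodule meets it nontrivially). -/
def IsInjectiveHullOfResidueField (A : Type u) [CommRing A] [IsLocalRing A]
    (E : Type v) [AddCommGroup E] [Module A E] : Prop :=
  Module.Injective A E ∧
    ∃ φ : ResidueField A →ₗ[A] E, Function.Injective φ ∧
      ∀ N : Submodule A E, N ≠ ⊥ → N ⊓ LinearMap.range φ ≠ ⊥

/-! ### Injective hulls of the residue field -/

theorem exists_extension {A M N Q : Type u} [CommRing A] [AddCommGroup M] [Module A M]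
    [AddCommGroup N] [Module A N] [AddCommGroup Q] [Module A Q] (hQ : Module.Injective A Q)
    (f : M →ₗ[A] N) (hf : Function.Injective f) (g : M →ₗ[A] Q) :
    ∃ h : N →ₗ[A] Q, h ∘ₗ f = g :=
  (Module.Baer.of_injective hQ).extension_property f hf g

namespace IsInjectiveHullOfResidueField

section Basic

variable {A : Type u} [CommRing A] [IsLocalRing A]

/-- Injective hulls are unique: an extension of one socle inclusion along the other is injective by
essentiality, and its retraction is injective for the same reason. -/
theorem unique {E E' : Type u} [AddCommGroup E] [Module A E] [AddCommGroup E'] [Module A E']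
    (hE : IsInjectiveHullOfResidueField A E) (hE' : IsInjectiveHullOfResidueField A E') :
    Nonempty (E ≃ₗ[A] E') := by
  obtain ⟨hi, φ, hφ, hess⟩ := hE
  obtain ⟨hi', φ', hφ', hess'⟩ := hE'
  obtain ⟨g, hg⟩ := exists_extension hi' φ hφ φ'
  have hg' : ∀ x, g (φ x) = φ' x := fun x => by rw [← hg]; rfl
  have hginj : Function.Injective g := by
    rw [← LinearMap.ker_eq_bot]
    by_contra hne
    refine hess _ hne ((Submodule.eq_bot_iff _).2 ?_)
    rintro _ ⟨hx, x, rfl⟩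
    have h0 : φ' x = 0 := by rw [← hg']; exact hx
    rw [(map_eq_zero_iff φ' hφ').1 h0, map_zero]
  obtain ⟨h, hh⟩ := exists_extension hi g hginj LinearMap.id
  have hh' : ∀ x, h (g x) = x := fun x => congr($hh x)
  have hhinj : Function.Injective h := by
    rw [← LinearMap.ker_eq_bot]
    by_contra hne
    refine hess' _ hne ((Submodule.eq_bot_iff _).2 ?_)
    rintro _ ⟨hx, x, rfl⟩
    have h0 : h (φ' x) = 0 := hx
    rw [← hg', hh'] at h0
    rw [← hg', h0, map_zero]
  exact ⟨LinearEquiv.ofBijective g ⟨hginj, fun y => ⟨h y, hhinj (hh' _)⟩⟩⟩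

variable {E : Type u} [AddCommGroup E] [Module A E]

/-- `E` is a cogenerator: map `A ∙ y` onto the residue field, and extend to `M` by injectivity. -/
theorem exists_apply_ne_zero (hE : IsInjectiveHullOfResidueField A E)
    {M : Type u} [AddCommGroup M] [Module A M] {y : M} (hy : y ≠ 0) :
    ∃ f : M →ₗ[A] E, f y ≠ 0 := by
  obtain ⟨hi, φ, hφ, -⟩ := hE
  let T := LinearMap.toSpanSingleton A M y
  have hT : LinearMap.ker T ≤ LinearMap.ker (Algebra.linearMap A (ResidueField A)) := by
    intro a ha
    have ha' : a • y = 0 := ha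
    have : a ∈ maximalIdeal A := by
      rw [mem_maximalIdeal, mem_nonunits_iff]
      intro hu
      exact hy (hu.smul_eq_zero.1 ha')
    exact (residue_eq_zero_iff a).2 this
  let g : LinearMap.range T →ₗ[A] E :=
    φ ∘ₗ (LinearMap.ker T).liftQ _ hT ∘ₗ T.quotKerEquivRange.symm.toLinearMap
  obtain ⟨f, hf⟩ := exists_extension hi (LinearMap.range T).subtype
    (Submodule.subtype_injective _) g
  refine ⟨f, ?_⟩
  have h1 : f y = φ 1 := by
    have h2 : T.quotKerEquivRange ((LinearMap.ker T).mkQ 1) = ⟨y, 1, by simp [T]⟩ :=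
      Subtype.ext (one_smul A y)
    have h3 : f y = g ⟨y, 1, by simp [T]⟩ := by rw [← hf]; rfl
    rw [h3, ← h2]
    simp only [g, LinearMap.comp_apply, LinearEquiv.coe_coe, LinearEquiv.symm_apply_apply]
    rw [Submodule.mkQ_apply, Submodule.liftQ_apply, Algebra.linearMap_apply, map_one]
  rw [h1]
  exact fun h => one_ne_zero ((map_eq_zero_iff φ hφ).1 h)

/-- The socle of `E` is no larger than the copy `range φ` of the residue field. -/
theorem mem_range_of_socle {φ : ResidueField A →ₗ[A] E}
    (hess : ∀ N : Submodule A E, N ≠ ⊥ → N ⊓ LinearMap.range φ ≠ ⊥)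
    {x : E} (hx : ∀ a ∈ maximalIdeal A, a • x = 0) : x ∈ LinearMap.range φ := by
  by_cases h0 : x = 0
  · rw [h0]; exact zero_mem _
  obtain ⟨z, ⟨hz, hz'⟩, hz0⟩ := (Submodule.ne_bot_iff _).1
    (hess (A ∙ x) (by simpa [Submodule.span_singleton_eq_bot] using h0))
  obtain ⟨a, rfl⟩ := Submodule.mem_span_singleton.1 hz
  have ha : IsUnit a := by
    by_contra h
    exact hz0 (hx a ((mem_maximalIdeal a).2 h))
  exact ((LinearMap.range φ).smul_mem_iff_of_isUnit ha).1 hz'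

/-- The socle of `E` is one-dimensional over the residue field. -/
theorem exists_smul_eq_of_socle (hE : IsInjectiveHullOfResidueField A E) {x y : E}
    (hx : ∀ a ∈ maximalIdeal A, a • x = 0) (hy : ∀ a ∈ maximalIdeal A, a • y = 0)
    (hx0 : x ≠ 0) : ∃ a : A, y = a • x := by
  obtain ⟨-, φ, hφ, hess⟩ := hE
  obtain ⟨c, rfl⟩ := mem_range_of_socle hess hx
  obtain ⟨d, rfl⟩ := mem_range_of_socle hess hy
  have hc : c ≠ 0 := by rintro rfl; exact hx0 (map_zero _)
  obtain ⟨a, ha⟩ := residue_surjective (d / c)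
  refine ⟨a, ?_⟩
  rw [← map_smul, Algebra.smul_def, ResidueField.algebraMap_eq, ha, div_mul_cancel₀ _ hc]

/-- Every element `x` of `E` is killed by a power of the maximal ideal `𝔪`.  Otherwise, by
essentiality, every `𝔪 ^ n • x` contains the socle, against Krull's intersection theorem. -/
theorem exists_pow_smul_eq_zero [IsNoetherianRing A] (hE : IsInjectiveHullOfResidueField A E)
    (x : E) : ∃ n : ℕ, ∀ a ∈ maximalIdeal A ^ n, a • x = 0 := by
  obtain ⟨-, φ, hφ, hess⟩ := hE
  by_contra! hcon
  have key : ∀ n : ℕ, ∃ b ∈ maximalIdeal A ^ n, b • x = φ 1 := by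
    intro n
    obtain ⟨a, ha, hax⟩ := hcon n
    obtain ⟨z, ⟨hz, c, hc⟩, hz0⟩ := (Submodule.ne_bot_iff _).1
      (hess (A ∙ (a • x)) (by simpa [Submodule.span_singleton_eq_bot] using hax))
    obtain ⟨b, rfl⟩ := Submodule.mem_span_singleton.1 hz
    have hc0 : c ≠ 0 := by rintro rfl; exact hz0 (by rw [← hc, map_zero])
    obtain ⟨d, hd⟩ := residue_surjective c⁻¹
    refine ⟨d * b * a, Ideal.mul_mem_left _ _ ha, ?_⟩
    rw [mul_smul, mul_smul, ← hc, ← map_smul, Algebra.smul_def, ResidueField.algebraMap_eq, hd,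
      inv_mul_cancel₀ hc0]
  obtain ⟨b₀, -, hb₀⟩ := key 0
  let X := A ∙ x
  have hmem : φ 1 ∈ X := hb₀ ▸ Submodule.smul_mem _ _ (Submodule.mem_span_singleton_self x)
  have h0 : (⟨φ 1, hmem⟩ : X) ∈ (⨅ i : ℕ, maximalIdeal A ^ i • ⊤ : Submodule A X) := by
    rw [Submodule.mem_iInf]
    intro n
    obtain ⟨b, hb, hbx⟩ := key n
    have : (⟨φ 1, hmem⟩ : X) = b • ⟨x, Submodule.mem_span_singleton_self x⟩ :=
      Subtype.ext hbx.symm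
    rw [this]
    exact Submodule.smul_mem_smul hb trivial
  rw [Ideal.iInf_pow_smul_eq_bot_of_isLocalRing _ (Ideal.IsPrime.ne_top inferInstance)] at h0
  exact one_ne_zero ((map_eq_zero_iff φ hφ).1 (congrArg Subtype.val h0))

/-- A finite module whose Matlis dual is `E` is free of rank one. -/
theorem nonempty_equiv_of_hom_equiv (hE : IsInjectiveHullOfResidueField A E)
    {H : Type u} [AddCommGroup H] [Module A H] [Module.Finite A H]
    (e : (H →ₗ[A] E) ≃ₗ[A] E) : Nonempty (H ≃ₗ[A] A) := by
  -- any two functionals killed by the maximal ideal are proportional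
  have prop : ∀ f g : H →ₗ[A] E, (∀ a ∈ maximalIdeal A, a • f = 0) →
      (∀ a ∈ maximalIdeal A, a • g = 0) → f ≠ 0 → ∃ a : A, g = a • f := by
    intro f g hf hg hf0
    obtain ⟨a, ha⟩ := hE.exists_smul_eq_of_socle (x := e f) (y := e g)
      (fun a ha => by rw [← map_smul, hf a ha, map_zero])
      (fun a ha => by rw [← map_smul, hg a ha, map_zero])
      (by simpa using hf0)
    exact ⟨a, e.injective (by rw [ha, map_smul])⟩
  -- the dual of `H / N`, for `N` containing `𝔪 H`, separates points
  have sep : ∀ (N : Submodule A H), maximalIdeal A • (⊤ : Submodule A H) ≤ N → ∀ y ∉ N,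
      ∃ f : H →ₗ[A] E, (∀ a ∈ maximalIdeal A, a • f = 0) ∧ (∀ z ∈ N, f z = 0) ∧ f y ≠ 0 := by
    intro N hN y hy
    obtain ⟨f, hf⟩ := hE.exists_apply_ne_zero (M := H ⧸ N) (y := N.mkQ y)
      (by simpa using hy)
    refine ⟨f ∘ₗ N.mkQ, fun a ha => ?_, fun z hz => ?_, hf⟩
    · ext z
      have : N.mkQ (a • z) = 0 := by
        rw [Submodule.mkQ_apply, Submodule.Quotient.mk_eq_zero]
        exact hN (Submodule.smul_mem_smul ha trivial)
      change a • f (N.mkQ z) = 0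
      rw [← map_smul, ← map_smul, this, map_zero]
    · have : N.mkQ z = 0 := by simpa using hz
      rw [LinearMap.comp_apply, this, map_zero]
  obtain ⟨y₀, hy₀⟩ := hE.exists_apply_ne_zero (M := A) one_ne_zero
  have hE0 : y₀ 1 ≠ 0 := hy₀
  have hmax : maximalIdeal A ≤ Ideal.jacobson ⊥ := by
    rw [jacobson_eq_maximalIdeal _ bot_ne_top]
  have hne : ∃ x : H, x ∉ maximalIdeal A • (⊤ : Submodule A H) := by
    by_contra! hall
    have htop : (⊤ : Submodule A H) = ⊥ :=
      Submodule.eq_bot_of_le_smul_of_le_jacobson_bot _ _ Module.Finite.fg_top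
        (fun z _ => hall z) hmax
    apply hE0
    have : e.symm (y₀ 1) = 0 := by
      ext z
      have hz : z ∈ (⊥ : Submodule A H) := htop ▸ trivial
      rw [(Submodule.mem_bot _).1 hz, map_zero, map_zero]
    simpa using this
  obtain ⟨x, hx⟩ := hne
  obtain ⟨g, hg, -, hgx⟩ := sep _ le_rfl x hx
  -- a functional vanishing on `A ∙ x + 𝔪 H` would be proportional to `g`, but `g x ≠ 0`
  have hgen : (⊤ : Submodule A H) ≤ A ∙ x := by
    refine Submodule.le_of_le_smul_of_le_jacobson_bot Module.Finite.fg_top hmax ?_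
    by_contra hcon
    obtain ⟨y, -, hy⟩ := SetLike.not_le_iff_exists.1 hcon
    obtain ⟨f, hf, hfN, hfy⟩ := sep _ le_sup_right y hy
    obtain ⟨a, rfl⟩ := prop f g hf hg (by rintro rfl; exact hfy rfl)
    apply hgx
    have := hfN x (Submodule.mem_sup_left (Submodule.mem_span_singleton_self x))
    rw [LinearMap.smul_apply, this, smul_zero]
  refine ⟨(LinearEquiv.ofBijective (LinearMap.toSpanSingleton A H x) ⟨?_, ?_⟩).symm⟩
  · rw [← LinearMap.ker_eq_bot, Submodule.eq_bot_iff]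
    intro s hs
    by_contra hs0
    have hsx : s • x = 0 := hs
    obtain ⟨f, hf⟩ := hE.exists_apply_ne_zero (M := A) hs0
    apply hf
    -- `s` kills `H`, hence its dual, hence `E`
    have : s • e.symm (f 1) = 0 := by
      ext z
      obtain ⟨b, rfl⟩ := Submodule.mem_span_singleton.1 (hgen (x := z) trivial)
      rw [LinearMap.smul_apply, ← map_smul, smul_comm, hsx, smul_zero, map_zero,
        LinearMap.zero_apply]
    rw [← map_smul, LinearEquiv.map_eq_zero_iff, ← map_smul, smul_eq_mul, mul_one] at this
    exact this
  · intro z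
    obtain ⟨b, hb⟩ := Submodule.mem_span_singleton.1 (hgen (x := z) trivial)
    exact ⟨b, hb⟩

end Basic
end IsInjectiveHullOfResidueField

/-! ### The evaluation map `M ⊗ E → Hom(Hom(M, R), E)` -/

section Eval
variable {R : Type u} [CommRing R]

/-- The evaluation map `m ⊗ e ↦ (f ↦ f m • e)`. -/
noncomputable def tensorEval (R : Type u) [CommRing R] (M E : Type u) [AddCommGroup M]
    [Module R M] [AddCommGroup E] [Module R E] :
    M ⊗[R] E →ₗ[R] (Module.Dual R M →ₗ[R] E) :=
  dualTensorHom R (Module.Dual R M) E ∘ₗ (Module.Dual.eval R M).rTensor E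

variable {M N E : Type u} [AddCommGroup M] [Module R M] [AddCommGroup N] [Module R N]
  [AddCommGroup E] [Module R E]

theorem tensorEval_tmul (m : M) (x : E) (f : Module.Dual R M) :
    tensorEval R M E (m ⊗ₜ x) f = f m • x := by
  simp [tensorEval]

theorem tensorEval_naturality (g : M →ₗ[R] N) (t : M ⊗[R] E) (f : Module.Dual R N) :
    tensorEval R N E (g.rTensor E t) f = tensorEval R M E t (g.dualMap f) := by
  induction t with
  | zero => simp
  | tmul m x => simp [tensorEval_tmul]
  | add a b ha hb => simp [ha, hb]

theorem tensorEval_bijective_of_projective [Module.Finite R M] [Module.Projective R M] :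
    Function.Bijective (tensorEval R M E) := by
  have h : (Module.Dual.eval R M).rTensor E =
      ((Module.evalEquiv R M).rTensor E).toLinearMap := rfl
  rw [tensorEval, h]
  exact dualTensorHom_bijective.comp (LinearEquiv.bijective _)

/-- For `E` injective both sides of the evaluation map are right exact in `M`, so bijectivity follows
from the free case by a finite presentation `Rᵃ → Rᵇ → M → 0`. -/
theorem tensorEval_bijective [IsNoetherianRing R] [Module.Finite R M]
    (hE : Module.Injective R E) : Function.Bijective (tensorEval R M E) := by
  obtain ⟨b, π, hπ⟩ := Module.Finite.exists_fin' R M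
  obtain ⟨a, δ₀, hδ₀⟩ := Module.Finite.exists_fin' R (LinearMap.ker π)
  let δ := (LinearMap.ker π).subtype ∘ₗ δ₀
  have hπδ : π ∘ₗ δ = 0 := by
    ext i
    exact (δ₀ _).2
  have hπt : Function.Surjective (π.rTensor E) := LinearMap.rTensor_surjective E hπ
  have hdual : Function.Injective π.dualMap := LinearMap.dualMap_injective_of_surjective hπ
  constructor
  · rw [← LinearMap.ker_eq_bot, Submodule.eq_bot_iff]
    intro t ht
    obtain ⟨t', rfl⟩ := hπt t
    have h1 : ∀ f, tensorEval R _ E t' (π.dualMap f) = 0 := fun f => by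
      rw [← tensorEval_naturality, LinearMap.mem_ker.1 ht, LinearMap.zero_apply]
    -- the functional of `t'` kills `ker (dual δ)`, hence factors through the range of `dual δ`
    have h2 : LinearMap.ker δ.dualMap ≤ LinearMap.ker (tensorEval R _ E t') := by
      intro f hf
      have hf' : ∀ z, f (δ z) = 0 := fun z => congr($(LinearMap.mem_ker.1 hf) z)
      have hker : LinearMap.ker π ≤ LinearMap.ker f := by
        intro z hz
        obtain ⟨w, hw⟩ := hδ₀ ⟨z, hz⟩
        have : δ w = z := congrArg Subtype.val hw
        rw [LinearMap.mem_ker, ← this, hf']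
      let f' : Module.Dual R M :=
        (LinearMap.ker π).liftQ f hker ∘ₗ (π.quotKerEquivOfSurjective hπ).symm.toLinearMap
      have hff' : π.dualMap f' = f := by
        ext i
        have : (π.quotKerEquivOfSurjective hπ).symm (π (Pi.single i 1)) =
            (LinearMap.ker π).mkQ (Pi.single i 1) := by
          rw [LinearEquiv.symm_apply_eq]; rfl
        simp [f', this]
      rw [LinearMap.mem_ker, ← hff', h1]
    let g : LinearMap.range δ.dualMap →ₗ[R] E :=
      (LinearMap.ker δ.dualMap).liftQ _ h2 ∘ₗ δ.dualMap.quotKerEquivRange.symm.toLinearMap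
    obtain ⟨g', hg'⟩ := exists_extension (M := LinearMap.range δ.dualMap) hE (LinearMap.range δ.dualMap).subtype
      (Submodule.subtype_injective _) g
    obtain ⟨t'', ht''⟩ := tensorEval_bijective_of_projective.2 g'
    have h3 : δ.rTensor E t'' = t' := by
      apply tensorEval_bijective_of_projective.1
      refine LinearMap.ext fun f => ?_
      rw [tensorEval_naturality, ht'']
      have h4 : g' (δ.dualMap f) = g ⟨δ.dualMap f, f, rfl⟩ := by rw [← hg']; rfl
      have h5 : δ.dualMap.quotKerEquivRange ((LinearMap.ker δ.dualMap).mkQ f) =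
        ⟨δ.dualMap f, f, rfl⟩ := rfl
      rw [h4, ← h5]
      simp only [g, LinearMap.comp_apply, LinearEquiv.coe_coe, LinearEquiv.symm_apply_apply]
      simp
    rw [← h3, ← LinearMap.comp_apply, ← LinearMap.rTensor_comp, hπδ, LinearMap.rTensor_zero,
      LinearMap.zero_apply]
  · intro g
    obtain ⟨g', hg'⟩ := exists_extension hE π.dualMap hdual g
    obtain ⟨t', ht'⟩ := tensorEval_bijective_of_projective.2 g'
    refine ⟨π.rTensor E t', LinearMap.ext fun f => ?_⟩
    rw [tensorEval_naturality, ht', ← hg']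
    rfl

end Eval

/-! ### Coinduction along a finite local homomorphism -/

section Coind

variable (R S : Type u) [CommRing R] [CommRing S] [Algebra R S]

/-- The coinduced module `Hom_R(S, M)`, as a type of its own so that it can carry the `S`-action
on the argument, `(s • f) x = f (s * x)`, besides the `R`-action on the values. -/
def Coind (M : Type u) [AddCommGroup M] [Module R M] : Type u := S →ₗ[R] M

namespace Coind

variable {R S} {M : Type u} [AddCommGroup M] [Module R M]

noncomputable instance : AddCommGroup (Coind R S M) := inferInstanceAs (AddCommGroup (S →ₗ[R] M))

noncomputable instance : Module R (Coind R S M) := inferInstanceAs (Module R (S →ₗ[R] M))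

instance : FunLike (Coind R S M) S M := inferInstanceAs (FunLike (S →ₗ[R] M) S M)

instance : LinearMapClass (Coind R S M) R S M :=
  inferInstanceAs (LinearMapClass (S →ₗ[R] M) R S M)

@[ext] theorem ext {f g : Coind R S M} (h : ∀ x, f x = g x) : f = g := DFunLike.ext _ _ h

@[simp] theorem add_apply (f g : Coind R S M) (x : S) : (f + g) x = f x + g x := rfl
@[simp] theorem zero_apply (x : S) : (0 : Coind R S M) x = 0 := rfl
theorem smul_apply' (r : R) (f : Coind R S M) (x : S) : (r • f) x = r • f x := rfl

noncomputable instance : SMul S (Coind R S M) :=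
  ⟨fun s f => LinearMap.comp (M₂ := S) (show S →ₗ[R] M from f) (LinearMap.mul R S s)⟩

@[simp] theorem smul_apply (s : S) (f : Coind R S M) (x : S) : (s • f) x = f (s * x) := rfl

noncomputable instance : Module S (Coind R S M) where
  one_smul f := by ext x; simp
  mul_smul a b f := by ext x; simp [mul_left_comm, mul_assoc]
  smul_zero a := by ext x; simp
  smul_add a f g := by ext x; simp
  add_smul a b f := by ext x; simp [add_mul]
  zero_smul f := by ext x; simp

instance : IsScalarTower R S (Coind R S M) where
  smul_assoc r s f := by
    ext x
    rw [smul_apply, smul_apply', smul_apply, smul_mul_assoc, map_smul]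

instance [IsNoetherianRing R] [Module.Finite R S] : Module.Finite S (Coind R S R) := by
  have h : IsNoetherian R (S →ₗ[R] R) := inferInstance
  have : Module.Finite R (Coind R S R) := Module.IsNoetherian.finite R (S →ₗ[R] R)
  exact Module.Finite.of_restrictScalars_finite R S _

/-- Coinduction preserves injectivity: `S`-linear maps into `Coind R S E` are `R`-linear maps into
`E`, by evaluation at `1`. -/
theorem injective {E : Type u} [AddCommGroup E] [Module R E] (hE : Module.Injective R E) :
    Module.Injective S (Coind R S E) := by
  apply Module.Baer.injective
  intro I g
  let g₁ : I →ₗ[R] E :=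
    { toFun x := g x 1
      map_add' x y := by rw [map_add, add_apply]
      map_smul' r x := by
        have h : g (r • x) = r • g x := (g.restrictScalars R).map_smul r x
        rw [h, smul_apply', RingHom.id_apply] }
  obtain ⟨h, hh⟩ := exists_extension hE
    (I.subtype.restrictScalars R) (Submodule.subtype_injective I) g₁
  refine ⟨LinearMap.toSpanSingleton S (Coind R S E) h, fun x hx => ?_⟩
  ext y
  have h1 : h (x * y) = g₁ ⟨x * y, I.mul_mem_right y hx⟩ := by rw [← hh]; rfl
  have h2 : (⟨x * y, I.mul_mem_right y hx⟩ : I) = y • ⟨x, hx⟩ := Subtype.ext (mul_comm x y)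
  change h (x * y) = _
  rw [h1, h2]
  change g (y • ⟨x, hx⟩) 1 = _
  rw [map_smul, smul_apply, mul_one]

variable [IsLocalRing R] [IsLocalRing S] [IsLocalHom (algebraMap R S)] [Module.Finite R S]
  [IsNoetherianRing R]

/-- Coinduction along a finite local homomorphism takes the injective hull of the residue field
of `R` to that of `S`.  Its socle is the dual of the residue field of `S` over that of `R`, which is
one-dimensional over the residue field of `S`; it is essential because every element is killed by a
power of the maximal ideal of `S`. -/
theorem isInjectiveHull
    (hrad : maximalIdeal S ≤ ((maximalIdeal R).map (algebraMap R S)).radical)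
    {E : Type u} [AddCommGroup E] [Module R E] (hE : IsInjectiveHullOfResidueField R E) :
    IsInjectiveHullOfResidueField S (Coind R S E) := by
  have hE' := hE
  obtain ⟨hi, φ, hφ, hess⟩ := hE
  refine ⟨injective hi, ?_⟩
  obtain ⟨ψ, hψ⟩ := Module.Projective.exists_dual_ne_zero (ResidueField R)
    (one_ne_zero (α := ResidueField S))
  -- the pairing `(c, d) ↦ ψ (c * d)` on the residue field of `S` is perfect
  let B : ResidueField S →ₗ[ResidueField R] Module.Dual (ResidueField R) (ResidueField S) :=
    (LinearMap.mul (ResidueField R) (ResidueField S)).compr₂ ψ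
  have hB : ∀ c d, B c d = ψ (c * d) := fun _ _ => rfl
  have hBinj : Function.Injective B := by
    rw [← LinearMap.ker_eq_bot, Submodule.eq_bot_iff]
    intro c hc
    by_contra hc0
    apply hψ
    rw [← mul_inv_cancel₀ hc0, ← hB, LinearMap.mem_ker.1 hc, LinearMap.zero_apply]
  have hBsurj : Function.Surjective B :=
    (LinearMap.injective_iff_surjective_of_finrank_eq_finrank
      Subspace.dual_finrank_eq.symm).1 hBinj
  let ρ : S →ₗ[R] ResidueField S := (IsScalarTower.toAlgHom R S (ResidueField S)).toLinearMap
  have hρ : ∀ s, ρ s = residue S s := fun _ => rfl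
  have hρsurj : Function.Surjective ρ := residue_surjective
  let Φ : ResidueField S →ₗ[S] Coind R S E :=
    { toFun c := φ ∘ₗ ((B c).restrictScalars R) ∘ₗ ρ
      map_add' c d := by
        ext x
        change φ (B (c + d) (ρ x)) = φ (B c (ρ x)) + φ (B d (ρ x))
        simp
      map_smul' s c := by
        ext x
        change φ (B (s • c) (ρ x)) = φ (B c (ρ (s * x)))
        rw [hB, hB, hρ, hρ, map_mul (residue S), Algebra.smul_def, ResidueField.algebraMap_eq,
          mul_comm (residue S s) c, mul_assoc] }
  have hΦ : ∀ c s, Φ c s = φ (B c (ρ s)) := fun _ _ => rfl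
  refine ⟨Φ, ?_, ?_⟩
  · rw [← LinearMap.ker_eq_bot, Submodule.eq_bot_iff]
    intro c hc
    apply hBinj
    ext d
    obtain ⟨s, rfl⟩ := hρsurj d
    apply hφ
    rw [← hΦ, LinearMap.mem_ker.1 hc]
    simp
  -- the socle of `Coind R S E` is contained in the range of `Φ`
  have hsoc : ∀ g : Coind R S E, (∀ a ∈ maximalIdeal S, a • g = 0) → g ∈ LinearMap.range Φ := by
    intro g hg
    have hgk : ∀ a ∈ maximalIdeal S, g a = 0 := fun a ha => by
      have := congr($(hg a ha) 1)
      simpa using this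
    have hgφ : ∀ s, g s ∈ LinearMap.range φ := by
      intro s
      apply IsInjectiveHullOfResidueField.mem_range_of_socle hess
      intro a ha
      rw [← map_smul, Algebra.smul_def]
      exact hgk _ (Ideal.mul_mem_right _ _ 
        ((mem_maximalIdeal _).2 fun hu => ha (isUnit_of_map_unit _ _ hu)))
    let g₀ : S →ₗ[R] ResidueField R :=
      (LinearEquiv.ofInjective φ hφ).symm.toLinearMap ∘ₗ
        LinearMap.codRestrict (LinearMap.range φ) (show S →ₗ[R] E from g) hgφ
    have hg₀ : ∀ s, φ (g₀ s) = g s := by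
      intro s
      have : LinearEquiv.ofInjective φ hφ (g₀ s) = ⟨g s, hgφ s⟩ := by
        simp only [g₀, LinearMap.comp_apply, LinearEquiv.coe_coe, LinearEquiv.apply_symm_apply]
        rfl
      exact congrArg Subtype.val this
    have hker : LinearMap.ker ρ ≤ LinearMap.ker g₀ := by
      intro a ha
      apply hφ
      rw [hg₀, map_zero]
      exact hgk a ((residue_eq_zero_iff a).1 ha)
    let g₁ : ResidueField S →ₗ[R] ResidueField R :=
      (LinearMap.ker ρ).liftQ g₀ hker ∘ₗ (ρ.quotKerEquivOfSurjective hρsurj).symm.toLinearMap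
    have hg₁ : ∀ s, g₁ (ρ s) = g₀ s := by
      intro s
      have : ρ s = ρ.quotKerEquivOfSurjective hρsurj ((LinearMap.ker ρ).mkQ s) := rfl
      rw [this]
      simp only [g₁, LinearMap.comp_apply, LinearEquiv.coe_coe, LinearEquiv.symm_apply_apply]
      simp
    obtain ⟨c, hc⟩ := hBsurj (g₁.extendScalarsOfSurjective residue_surjective)
    refine ⟨c, ?_⟩
    ext s
    rw [hΦ, hc, ← hg₀, ← hg₁]
    rfl
  intro N hN
  obtain ⟨f, hfN, hf0⟩ := (Submodule.ne_bot_iff _).1 hN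
  -- `f` is killed by a power of the maximal ideal of `S`
  have hpow : ∃ n : ℕ, ∀ a ∈ maximalIdeal S ^ n, a • f = 0 := by
    obtain ⟨G, hG⟩ := (Module.Finite.fg_top : (⊤ : Submodule R S).FG)
    choose t ht using fun x : E => hE'.exists_pow_smul_eq_zero x
    let T := G.sup (fun x => t (f x))
    have hT : ∀ a ∈ maximalIdeal R ^ T, ∀ s : S, f (a • s) = 0 := by
      intro a ha s
      have hs : s ∈ Submodule.span R (G : Set S) := hG ▸ trivial
      induction hs using Submodule.span_induction with
      | mem x hx =>
        rw [map_smul]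
        exact ht _ a (Ideal.pow_le_pow_right (Finset.le_sup (f := fun x => t (f x)) hx) ha)
      | zero => rw [smul_zero, map_zero]
      | add x y _ _ hx hy => rw [smul_add, map_add, hx, hy, add_zero]
      | smul r x _ hx => rw [smul_comm, map_smul, hx, smul_zero]
    have : IsNoetherianRing S := IsNoetherianRing.of_finite R S
    obtain ⟨m, hm⟩ := Ideal.exists_pow_le_of_le_radical_of_fg hrad (IsNoetherian.noetherian _)
    refine ⟨m * T, fun a ha => ?_⟩
    have ha' : a ∈ (maximalIdeal R ^ T).map (algebraMap R S) := by
      rw [Ideal.map_pow]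
      rw [pow_mul] at ha
      exact Ideal.pow_right_mono hm T ha
    ext s
    rw [smul_apply, zero_apply]
    clear ha
    induction ha' using Submodule.span_induction generalizing s with
    | mem x hx =>
      obtain ⟨r, hr, rfl⟩ := hx
      rw [← Algebra.smul_def, hT r hr]
    | zero => rw [zero_mul, map_zero]
    | add x y _ _ hx hy => rw [add_mul, map_add, hx, hy, add_zero]
    | smul r x _ hx => rw [smul_eq_mul, mul_comm r x, mul_assoc, hx]
  -- multiply `f` by an element of the last power not killing it, to land in the socle
  classical
  have hspec := Nat.find_spec hpow
  obtain ⟨n, hn⟩ : ∃ n, Nat.find hpow = n + 1 := by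
    refine Nat.exists_eq_succ_of_ne_zero fun h0 => hf0 ?_
    rw [h0] at hspec
    simpa using hspec 1 (by simp)
  have hmin := Nat.find_min hpow (m := n) (by omega)
  push Not at hmin
  obtain ⟨a, ha, haf⟩ := hmin
  rw [hn] at hspec
  refine (Submodule.ne_bot_iff _).2 ⟨a • f, ⟨N.smul_mem a hfN, hsoc _ fun b hb => ?_⟩, haf⟩
  rw [← mul_smul]
  exact hspec _ (by rw [pow_succ']; exact Ideal.mul_mem_mul hb ha)

end Coind

/-- The base change of an injective module `E` is the `S`-module of maps from `Hom_R(S, R)` to the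
coinduced module `Hom_R(S, E)`, by `t ↦ (h ↦ (x ↦ tensorEval t (x • h)))`. -/
theorem nonempty_baseChange_equiv {R S : Type u} [CommRing R] [CommRing S] [Algebra R S]
    [IsNoetherianRing R] [Module.Finite R S] {E : Type u} [AddCommGroup E] [Module R E] (hE : Module.Injective R E) :
    Nonempty (S ⊗[R] E ≃ₗ[S] (Coind R S R →ₗ[S] Coind R S E)) := by
  -- `Coind R S R`, with its `R`-action, as a dual module
  let ι : Coind R S R ≃ₗ[R] Module.Dual R S := LinearEquiv.refl R (Module.Dual R S)
  have hι : ∀ h x, ι h x = h x := fun _ _ => rfl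
  have hsmul : ∀ (s : S) (t : S ⊗[R] E) (h : Coind R S R),
      tensorEval R S E (s • t) (ι h) = tensorEval R S E t (ι (s • h)) := by
    intro s t h
    induction t with
    | zero => rw [smul_zero, map_zero, LinearMap.zero_apply, LinearMap.zero_apply]
    | tmul m x =>
      rw [TensorProduct.smul_tmul', tensorEval_tmul, tensorEval_tmul, hι, hι, Coind.smul_apply,
        smul_eq_mul]
    | add a b ha hb =>
      rw [smul_add, map_add, map_add, LinearMap.add_apply, LinearMap.add_apply, ha, hb]
  let Ψ₀ (t : S ⊗[R] E) : Coind R S R →ₗ[S] Coind R S E :=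
    { toFun h := tensorEval R S E t ∘ₗ ι.toLinearMap ∘ₗ
        (LinearMap.toSpanSingleton S _ h).restrictScalars R
      map_add' h h' := by
        ext x
        change tensorEval R S E t (ι (x • (h + h'))) =
          tensorEval R S E t (ι (x • h)) + tensorEval R S E t (ι (x • h'))
        rw [smul_add, map_add, map_add]
      map_smul' s h := by
        ext x
        change tensorEval R S E t (ι (x • (s • h))) = tensorEval R S E t (ι ((s * x) • h))
        rw [← mul_smul, mul_comm] }
  have hΨ₀ : ∀ t h x, Ψ₀ t h x = tensorEval R S E t (ι (x • h)) := fun _ _ _ => rfl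
  let Ψ : S ⊗[R] E →ₗ[S] (Coind R S R →ₗ[S] Coind R S E) :=
    { toFun := Ψ₀
      map_add' t t' := by
        ext h x
        rw [LinearMap.add_apply, Coind.add_apply, hΨ₀, hΨ₀, hΨ₀, map_add, LinearMap.add_apply]
      map_smul' s t := by
        ext h x
        rw [RingHom.id_apply, LinearMap.smul_apply, Coind.smul_apply, hΨ₀, hΨ₀, hsmul,
          ← mul_smul] }
  have hbij := tensorEval_bijective (R := R) (M := S) hE
  refine ⟨LinearEquiv.ofBijective Ψ ⟨fun t t' htt => hbij.1 (LinearMap.ext fun h => ?_),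
    fun g => ?_⟩⟩
  · obtain ⟨h, rfl⟩ := ι.surjective h
    have : Ψ₀ t h 1 = Ψ₀ t' h 1 := congr($htt h 1)
    rwa [hΨ₀, hΨ₀, one_smul] at this
  · let g₀ : Module.Dual R S →ₗ[R] E :=
      { toFun h := g (ι.symm h) 1
        map_add' x y := by rw [map_add, map_add, Coind.add_apply]
        map_smul' r x := by
          have : g (r • ι.symm x) = r • g (ι.symm x) := (g.restrictScalars R).map_smul r _
          rw [map_smul, this, Coind.smul_apply', RingHom.id_apply] }
    obtain ⟨t, ht⟩ := hbij.2 g₀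
    refine ⟨t, ?_⟩
    ext h x
    change tensorEval R S E t (ι (x • h)) = _
    rw [ht]
    change g (ι.symm (ι (x • h))) 1 = _
    rw [LinearEquiv.symm_apply_apply, map_smul, Coind.smul_apply, mul_one]

/-- For a finite local homomorphism `R → S` such that the maximal ideal of `R` generates an ideal
primary to the maximal ideal of `S`, the module `Hom_R(S, R)` is free of rank one over `S`
exactly when base change carries the injective hull of the residue field of `R` to that of `S`. -/
theorem nonempty_coind_equiv_iff {R S : Type u} [CommRing R] [CommRing S] [Algebra R S]
    [IsNoetherianRing R] [Module.Finite R S] [IsLocalRing R] [IsLocalRing S]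
    [IsLocalHom (algebraMap R S)]
    (hrad : maximalIdeal S ≤ ((maximalIdeal R).map (algebraMap R S)).radical)
    {E E' : Type u} [AddCommGroup E] [Module R E] [AddCommGroup E'] [Module S E']
    (hE : IsInjectiveHullOfResidueField R E) (hE' : IsInjectiveHullOfResidueField S E') :
    Nonempty (Coind R S R ≃ₗ[S] S) ↔ Nonempty (S ⊗[R] E ≃ₗ[S] E') := by
  obtain ⟨e₁⟩ := nonempty_baseChange_equiv (S := S) hE.1
  obtain ⟨e₂⟩ := (Coind.isInjectiveHull hrad hE).unique hE'
  let e := e₁.trans (LinearEquiv.congrRight e₂)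
  constructor
  · rintro ⟨c⟩
    exact ⟨e.trans ((LinearEquiv.congrLeft E' S c).trans (LinearMap.ringLmapEquivSelf S S E'))⟩
  · rintro ⟨c⟩
    exact hE'.nonempty_equiv_of_hom_equiv (e.symm.trans c)

end Coind

/-- Let `R` be an `F`-finite Noetherian local ring of prime characteristic
`p` and `E` the injective hull of its residue field.  Then `Hom_R(R^f, R) ≅ R` as left
`R`-modules (the left action on the right-module homomorphisms `R^f → R` being
`(r • ψ)(x) = ψ (r * x)`) if and only if `F_R(E) ≅ E`. -/
theorem hom_frobTwist_equiv_iff_frobModule_equiv (R : Type u) [CommRing R]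
    [IsNoetherianRing R] [IsLocalRing R] (p : ℕ) [Fact p.Prime] [CharP R p]
    [Module.Finite R (FrobTwist R p)]
    (E : Type u) [AddCommGroup E] [Module R E] (hE : IsInjectiveHullOfResidueField R E) :
    (∃ e : (FrobTwist R p →ₗ[R] R) ≃+ R,
        ∀ (r : R) (ψ : FrobTwist R p →ₗ[R] R),
          e (ψ ∘ₗ LinearMap.mul R (FrobTwist R p) (FrobTwist.of R p r)) = r * e ψ) ↔
      Nonempty (FrobModule R p E ≃ₗ[R] E) := by
  have : IsLocalRing (FrobTwist R p) := inferInstanceAs (IsLocalRing R)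
  -- `E` also serves as the hull for the ring `FrobTwist R p`, which is `R` itself
  let instE : Module (FrobTwist R p) E := inferInstanceAs (Module R E)
  have hE' : IsInjectiveHullOfResidueField (FrobTwist R p) E := hE
  have hloc : IsLocalHom (algebraMap R (FrobTwist R p)) := ⟨fun r hr => by
    have hr' : IsUnit (r ^ p) := hr
    exact (isUnit_pow_iff (Fact.out : p.Prime).ne_zero).1 hr'⟩
  have hrad : maximalIdeal (FrobTwist R p) ≤
      ((maximalIdeal R).map (algebraMap R (FrobTwist R p))).radical := fun r hr =>
    ⟨p, Ideal.mem_map_of_mem (algebraMap R (FrobTwist R p)) (show r ∈ maximalIdeal R from hr)⟩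
  refine Iff.trans ?_ (nonempty_coind_equiv_iff hrad hE hE')
  constructor
  · rintro ⟨e, he⟩
    exact ⟨{ e with map_smul' := he }⟩
  · rintro ⟨e⟩
    exact ⟨e.toAddEquiv, e.map_smul⟩
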